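/- arXiv:2403.10432 — 2 statements merged into one kernel-verified Lean document; each statement's English description precedes it below -/
import Mathlib

section
/- Let n ≥ 1 be a natural number and z a real number with z > n. Then ∫_z^∞ y^{n-1} e^{-y}/(n-1)! dy ≤ n z^n e^{-z} / (n! (z - n)). -/
open MeasureTheory Real

/-! Write `g y = y ^ (s - 1) * exp (-y)`. Since `(y - s) * g y` is the derivative of
`-(y ^ s * exp (-y))`, its integral over `(z, ∞)` is exactly `z ^ s * exp (-z)`. On that half-line
`z - s ≤ y - s`, so `(z - s) * ∫ g` is at most this value. -/

lemma integrableOn_Ioi_rpow_mul_exp_neg (s : ℝ) {z : ℝ} (hz : 0 < z) :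
    IntegrableOn (fun y => y ^ s * exp (-y)) (Set.Ioi z) := by
  refine integrable_of_isBigO_exp_neg one_half_pos (fun y hy => ?_) ?_
  · have hy0 : y ≠ 0 := (hz.trans_le hy).ne'
    exact ((continuousAt_rpow_const y s (.inl hy0)).mul (by fun_prop)).continuousWithinAt
  · simpa only [mul_comm] using (Gamma_integrand_isLittleO s).isBigO

lemma hasDerivAt_neg_rpow_mul_exp_neg (s : ℝ) {y : ℝ} (hy : y ≠ 0) :
    HasDerivAt (fun y => -(y ^ s * exp (-y))) ((y - s) * (y ^ (s - 1) * exp (-y))) y := by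
  refine ((hasDerivAt_rpow_const (.inl hy)).mul (hasDerivAt_neg y).exp).neg.congr_deriv ?_
  rw [rpow_sub_one hy]
  field_simp
  ring

lemma integrableOn_Ioi_sub_mul_rpow_mul_exp_neg (s : ℝ) {z : ℝ} (hz : 0 < z) :
    IntegrableOn (fun y => (y - s) * (y ^ (s - 1) * exp (-y))) (Set.Ioi z) := by
  refine ((integrableOn_Ioi_rpow_mul_exp_neg s hz).sub
    ((integrableOn_Ioi_rpow_mul_exp_neg (s - 1) hz).const_mul s)).congr_fun
    (fun y hy => ?_) measurableSet_Ioi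
  have hy0 : y ≠ 0 := (hz.trans hy).ne'
  simp only [Pi.sub_apply, rpow_sub_one hy0]
  field_simp

lemma integral_Ioi_sub_mul_rpow_mul_exp_neg (s : ℝ) {z : ℝ} (hz : 0 < z) :
    ∫ y in Set.Ioi z, (y - s) * (y ^ (s - 1) * exp (-y)) = z ^ s * exp (-z) := by
  have hlim : Filter.Tendsto (fun y : ℝ => -(y ^ s * exp (-y))) Filter.atTop (nhds 0) := by
    simpa using (tendsto_rpow_mul_exp_neg_mul_atTop_nhds_zero s 1 one_pos).neg
  have hderiv (y : ℝ) (hy : y ∈ Set.Ici z) :=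
    hasDerivAt_neg_rpow_mul_exp_neg s (hz.trans_le hy).ne'
  rw [integral_Ioi_of_hasDerivAt_of_tendsto' hderiv
    (integrableOn_Ioi_sub_mul_rpow_mul_exp_neg s hz) hlim, zero_sub, neg_neg]

lemma sub_mul_integral_Ioi_rpow_mul_exp_neg_le (s : ℝ) {z : ℝ} (hz : 0 < z) :
    (z - s) * ∫ y in Set.Ioi z, y ^ (s - 1) * exp (-y) ≤ z ^ s * exp (-z) := by
  rw [← integral_const_mul, ← integral_Ioi_sub_mul_rpow_mul_exp_neg s hz]
  refine setIntegral_mono_on ((integrableOn_Ioi_rpow_mul_exp_neg (s - 1) hz).const_mul (z - s))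
    (integrableOn_Ioi_sub_mul_rpow_mul_exp_neg s hz) measurableSet_Ioi fun y hy => ?_
  have hzy : z < y := hy
  have hy0 : 0 < y := hz.trans hzy
  gcongr

theorem gamma_tail_bound_general {s z : ℝ} (hs : 0 < s) (hsz : s < z) :
    ∫ y in Set.Ioi z, y ^ (s - 1) * exp (-y) / Gamma s ≤
      s * z ^ s * exp (-z) / (Gamma (s + 1) * (z - s)) := by
  have hd : 0 < z - s := sub_pos.mpr hsz
  calc ∫ y in Set.Ioi z, y ^ (s - 1) * exp (-y) / Gamma s
      = (∫ y in Set.Ioi z, y ^ (s - 1) * exp (-y)) / Gamma s := integral_div _ _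
    _ ≤ z ^ s * exp (-z) / (z - s) / Gamma s := by
      gcongr
      rw [le_div_iff₀' hd]
      exact sub_mul_integral_Ioi_rpow_mul_exp_neg_le s (hs.trans hsz)
    _ = s * z ^ s * exp (-z) / (Gamma (s + 1) * (z - s)) := by
      rw [Gamma_add_one hs.ne']
      field_simp

/-- Gamma tail bound: for `n ≥ 1` and `z > n`,
`∫_z^∞ y^{n-1} e^{-y}/(n-1)! dy ≤ n z^n e^{-z} / (n! (z - n))`. -/
theorem gamma_tail_bound (n : ℕ) (hn : 1 ≤ n) (z : ℝ) (hz : (n : ℝ) < z) :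
    ∫ y in Set.Ioi z, y ^ (n - 1) * Real.exp (-y) / (Nat.factorial (n - 1)) ≤
      (n : ℝ) * z ^ n * Real.exp (-z) / ((Nat.factorial n : ℝ) * (z - n)) := by
  obtain ⟨m, rfl⟩ := Nat.exists_eq_add_of_le' hn
  simpa [← rpow_natCast, ← Gamma_nat_eq_factorial] using
    gamma_tail_bound_general (Nat.cast_pos.mpr hn) hz
end

section
/- The function f(z) = (z/2)·ln(z) − z − ln Γ(1 + z/2) is nonincreasing on the interval [2, ∞). Equivalently, the map z ↦ z^{z/2} e^{-z} / Γ(1 + z/2) is nonincreasing for z ≥ 2. -/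
open Real

/-!
The recurrence `Γ (1 + x) = x * Γ x` says that `log x` is the slope of the convex function `log ∘ Γ`
over `[x, 1 + x]`, so it is at most the logarithmic derivative of `Γ` at `1 + x`. Hence
`g x = x * log x - x - log (Γ (1 + x))`, whose derivative is `log x` minus that logarithmic
derivative, is antitone. At `x = z / 2` the exponent of the theorem is `g (z / 2)` minus the linear
term `(1 - log 2) / 2 * z`, which increases because `log 2 < 1`.
-/

lemma hasDerivAt_log_Gamma {x : ℝ} (hx : 0 < x) :
    HasDerivAt (fun y : ℝ => log (Gamma y)) (logDeriv Gamma x) x :=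
  (differentiableOn_Gamma_Ioi.differentiableAt (Ioi_mem_nhds hx)).hasDerivAt.log
    (Gamma_pos_of_pos hx).ne'

lemma log_Gamma_one_add {x : ℝ} (hx : 0 < x) :
    log (Gamma (1 + x)) = log x + log (Gamma x) := by
  rw [add_comm, Gamma_add_one hx.ne', log_mul hx.ne' (Gamma_pos_of_pos hx).ne']

lemma log_le_logDeriv_Gamma_one_add {x : ℝ} (hx : 0 < x) :
    log x ≤ logDeriv Gamma (1 + x) := by
  have hx' : 0 < 1 + x := by positivity
  calc log x = slope (log ∘ Gamma) x (1 + x) := by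
        simp only [slope_def_field, Function.comp_apply, log_Gamma_one_add hx,
          add_sub_cancel_right, div_one]
    _ ≤ logDeriv Gamma (1 + x) :=
        convexOn_log_Gamma.slope_le_of_hasDerivAt hx hx' (lt_one_add x) (hasDerivAt_log_Gamma hx')

lemma hasDerivAt_mul_log_sub_self_sub_log_Gamma_one_add {x : ℝ} (hx : 0 < x) :
    HasDerivAt (fun y : ℝ => y * log y - y - log (Gamma (1 + y)))
      (log x - logDeriv Gamma (1 + x)) x := by
  have hΓ : HasDerivAt (fun y : ℝ => log (Gamma (1 + y))) (logDeriv Gamma (1 + x)) x :=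
    (hasDerivAt_log_Gamma (by positivity)).comp_const_add 1 x
  exact (((hasDerivAt_mul_log hx.ne').fun_sub (hasDerivAt_id' x)).fun_sub hΓ).congr_deriv (by ring)

lemma antitoneOn_mul_log_sub_self_sub_log_Gamma_one_add :
    AntitoneOn (fun x : ℝ => x * log x - x - log (Gamma (1 + x))) (Set.Ioi 0) := by
  have hderiv {x : ℝ} (hx : x ∈ Set.Ioi 0) :=
    hasDerivAt_mul_log_sub_self_sub_log_Gamma_one_add hx
  exact antitoneOn_of_hasDerivWithinAt_nonpos (convex_Ioi 0)
    (fun x hx => (hderiv hx).continuousAt.continuousWithinAt)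
    (fun x hx => (hderiv (interior_subset hx)).hasDerivWithinAt)
    (fun x hx => sub_nonpos.2 (log_le_logDeriv_Gamma_one_add (interior_subset hx)))

lemma strictAntiOn_half_mul_log_sub_self_sub_log_Gamma :
    StrictAntiOn (fun z : ℝ => z / 2 * log z - z - log (Gamma (1 + z / 2))) (Set.Ioi 0) := by
  let g : ℝ → ℝ := fun x => x * log x - x - log (Gamma (1 + x))
  have hg : AntitoneOn (fun z : ℝ => g (z / 2)) (Set.Ioi 0) := fun a ha b hb hab =>
    antitoneOn_mul_log_sub_self_sub_log_Gamma_one_add (Set.mem_Ioi.2 (half_pos ha))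
      (Set.mem_Ioi.2 (half_pos hb)) (by gcongr)
  have hlin : StrictAnti fun z : ℝ => -((1 - log 2) / 2 * z) := by
    have hslope : 0 < (1 - log 2) / 2 := by linarith [log_two_lt_d9]
    exact (strictMono_mul_left_of_pos hslope).neg
  refine (hg.add_strictAnti (hlin.strictAntiOn _)).congr fun z hz => ?_
  simp only [g, log_div (ne_of_gt hz) two_ne_zero]
  ring

lemma exp_half_mul_log_sub_self_sub_log_Gamma {z : ℝ} (hz : 0 < z) :
    exp (z / 2 * log z - z - log (Gamma (1 + z / 2))) =
      z ^ (z / 2) * exp (-z) / Gamma (1 + z / 2) := by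
  rw [exp_sub, exp_log (Gamma_pos_of_pos (by positivity)), sub_eq_add_neg, exp_add,
    rpow_def_of_pos hz, mul_comm (log z)]

theorem antitone_gamma_tail_bound_fn_general :
    StrictAntiOn (fun z : ℝ => z / 2 * log z - z - log (Gamma (1 + z / 2))) (Set.Ioi 0) ∧
    StrictAntiOn (fun z : ℝ => z ^ (z / 2) * exp (-z) / Gamma (1 + z / 2)) (Set.Ioi 0) :=
  ⟨strictAntiOn_half_mul_log_sub_self_sub_log_Gamma,
    (exp_strictMono.comp_strictAntiOn strictAntiOn_half_mul_log_sub_self_sub_log_Gamma).congr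
      fun _ hz => exp_half_mul_log_sub_self_sub_log_Gamma hz⟩

/-- The function `z ↦ (z/2) ln z − z − ln Γ(1 + z/2)` is nonincreasing on `[2, ∞)`;
equivalently, `z ↦ z^{z/2} e^{-z} / Γ(1 + z/2)` is nonincreasing on `[2, ∞)`. -/
theorem antitone_gamma_tail_bound_fn :
    AntitoneOn (fun z : ℝ => z / 2 * Real.log z - z - Real.log (Real.Gamma (1 + z / 2)))
      (Set.Ici (2 : ℝ)) ∧
    AntitoneOn (fun z : ℝ => z ^ (z / 2) * Real.exp (-z) / Real.Gamma (1 + z / 2))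
      (Set.Ici (2 : ℝ)) := by
  have hsub : Set.Ici (2 : ℝ) ⊆ Set.Ioi 0 := Set.Ici_subset_Ioi.2 two_pos
  exact antitone_gamma_tail_bound_fn_general.imp (·.antitoneOn.mono hsub) (·.antitoneOn.mono hsub)
end
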